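/- Let α ∈ (1,2), T > 0, L > 0, and let f : [0,T] × ℝ → ℝ be continuous with |f(t,x) − f(t,y)| ≤ L|x − y| for all t, x, y. Let y₁, y₂ : [0,T] → ℝ be continuous and satisfy yₖ(t) = y_{k,0} + y_{k,1} t + (1/Γ(α)) ∫₀ᵗ (t−s)^{α−1} f(s, yₖ(s)) ds for k = 1, 2, with y_{1,0} ≤ y_{2,0} and y_{1,1} ≤ y_{2,1}. Suppose T* ∈ (0,T] is such that E_{α,α}(−L t^α) > 0, E_{α,1}(−L t^α) > 0, and E_{α,2}(−L t^α) > 0 for all t ∈ [0,T*]. For t ∈ [0,T] define ã₋(t) := inf{ (f(τ, y + y₁(τ)) − f(τ, y₁(τ)))/y : τ ∈ [0,t], y ≠ 0 } and ã*(t) := sup{ (f(τ, y + y₁(τ)) − f(τ, y₁(τ)))/y : τ ∈ [0,t], y ≠ 0 }. Then for all t ∈ [0,T*]: (y_{2,0} − y_{1,0}) E_{α,1}(ã₋(t) t^α) + (y_{2,1} − y_{1,1}) t E_{α,2}(ã₋(t) t^α) ≤ y₂(t) − y₁(t) ≤ (y_{2,0} − y_{1,0}) E_{α,1}(ã*(t)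 t^α) + (y_{2,1} − y_{1,1}) t E_{α,2}(ã*(t) t^α). -/

import Mathlib

/-- The two-parameter Mittag-Leffler function `E_{α,β}(z) = ∑ₖ zᵏ / Γ(αk + β)`. -/
noncomputable def mlE (α β z : ℝ) : ℝ := ∑' k : ℕ, z ^ k / Real.Gamma (α * k + β)

open MeasureTheory in
theorem aux_beta (a b t : ℝ) (ha : 1 ≤ a) (hb : 1 < b) (ht : 0 ≤ t) :
    ∫ r in (0:ℝ)..t, (t - r) ^ (b - 1) * r ^ (a - 1)
      = Real.Gamma a * Real.Gamma b / Real.Gamma (a + b) * t ^ (a + b - 1) := by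
  rcases ht.eq_or_lt with rfl | ht
  · rw [Real.zero_rpow (by linarith)]; simp
  have h1 := Complex.betaIntegral_scaled (a : ℂ) (b : ℂ) ht
  have h2 := Complex.Gamma_mul_Gamma_eq_betaIntegral (s := (a:ℂ)) (t := (b:ℂ))
    (by simp; linarith) (by simp; linarith)
  have hne : Real.Gamma (a + b) ≠ 0 := (Real.Gamma_pos_of_pos (by linarith)).ne'
  have hne' : Complex.Gamma ((a:ℂ) + b) ≠ 0 := by
    rw [← Complex.ofReal_add, Complex.Gamma_ofReal]; exact_mod_cast hne
  have h3 : Complex.betaIntegral a b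
      = ((Real.Gamma a * Real.Gamma b / Real.Gamma (a + b) : ℝ) : ℂ) := by
    push_cast
    rw [← Complex.Gamma_ofReal, ← Complex.Gamma_ofReal, ← Complex.Gamma_ofReal]
    push_cast
    rw [h2]; field_simp
  have h4 : (∫ x in (0:ℝ)..t, (x : ℂ) ^ ((a:ℂ) - 1) * ((t : ℂ) - x) ^ ((b:ℂ) - 1))
      = ((∫ r in (0:ℝ)..t, (t - r) ^ (b - 1) * r ^ (a - 1) : ℝ) : ℂ) := by
    rw [← intervalIntegral.integral_ofReal]
    apply intervalIntegral.integral_congr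
    intro x hx
    rw [Set.uIcc_of_le ht.le] at hx
    simp only
    push_cast
    rw [Complex.ofReal_cpow (by linarith [hx.2]), Complex.ofReal_cpow hx.1]
    push_cast
    ring
  rw [h4, h3] at h1
  have h5 : (t:ℂ) ^ ((a:ℂ) + b - 1) = ((t ^ (a + b - 1) : ℝ) : ℂ) := by
    rw [Complex.ofReal_cpow ht.le]; push_cast; rfl
  rw [h5] at h1
  have := Complex.ofReal_injective (h1.trans (Complex.ofReal_mul _ _).symm)
  rw [this]; ring

noncomputable def phiK (a x : ℝ) : ℝ := (max x 0) ^ (a - 1) / Real.Gamma a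

theorem phiK_cont (a : ℝ) (ha : 1 ≤ a) : Continuous (phiK a) := by
  unfold phiK
  exact ((continuous_id.max continuous_const).rpow_const (fun _ => Or.inr (by linarith))).div_const _

theorem phiK_nonpos (a x : ℝ) (ha : 1 < a) (hx : x ≤ 0) : phiK a x = 0 := by
  unfold phiK
  rw [max_eq_right hx, Real.zero_rpow (by linarith), zero_div]

theorem phiK_nonneg (a x : ℝ) (hx : 0 ≤ x) : phiK a x = x ^ (a - 1) / Real.Gamma a := by
  unfold phiK
  rw [max_eq_left hx]

theorem aux_beta_phi (a b s t : ℝ) (ha : 1 < a) (hb : 1 < b) (hs : 0 ≤ s) (ht : s ≤ t) :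
    ∫ r in (0:ℝ)..t, phiK b (t - r) * phiK a (r - s) = phiK (b + a) (t - s) := by
  have hc : Continuous fun r => phiK b (t - r) * phiK a (r - s) :=
    ((phiK_cont b hb.le).comp (by fun_prop)).mul ((phiK_cont a ha.le).comp (by fun_prop))
  rw [← intervalIntegral.integral_add_adjacent_intervals (b := s)
    (hc.intervalIntegrable _ _) (hc.intervalIntegrable _ _)]
  have h0 : ∫ r in (0:ℝ)..s, phiK b (t - r) * phiK a (r - s) = 0 := by
    rw [intervalIntegral.integral_congr (g := fun _ => 0)]
    · simp
    · intro r hr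
      rw [Set.uIcc_of_le hs] at hr
      simp only
      rw [phiK_nonpos a _ ha (by linarith [hr.2]), mul_zero]
  rw [h0, zero_add]
  have h1 : ∫ r in s..t, phiK b (t - r) * phiK a (r - s)
      = ∫ r in (0:ℝ)..(t - s), phiK b (t - s - r) * phiK a r := by
    have := intervalIntegral.integral_comp_sub_right
      (fun r => phiK b (t - s - r) * phiK a r) (a := s) (b := t) s
    rw [sub_self] at this
    rw [← this]
    congr 1; ext r; congr 2; ring
  rw [h1]
  have h2 : ∫ r in (0:ℝ)..(t - s), phiK b (t - s - r) * phiK a r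
     = ∫ r in (0:ℝ)..(t - s), (1 / (Real.Gamma a * Real.Gamma b)) *
        ((t - s - r) ^ (b - 1) * r ^ (a - 1)) := by
    apply intervalIntegral.integral_congr
    intro r hr
    rw [Set.uIcc_of_le (by linarith)] at hr
    simp only
    rw [phiK_nonneg _ _ hr.1, phiK_nonneg _ _ (by linarith [hr.2])]
    have := (Real.Gamma_pos_of_pos (by linarith : 0 < a)).ne'
    have := (Real.Gamma_pos_of_pos (by linarith : 0 < b)).ne'
    field_simp
  rw [h2, intervalIntegral.integral_const_mul, aux_beta a b (t - s) ha.le hb (by linarith),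
    phiK_nonneg _ _ (by linarith)]
  have := (Real.Gamma_pos_of_pos (by linarith : 0 < a)).ne'
  have := (Real.Gamma_pos_of_pos (by linarith : 0 < b)).ne'
  rw [add_comm b a]
  field_simp

open MeasureTheory in
theorem aux_semigroup (a b t : ℝ) (ha : 1 < a) (hb : 1 < b) (ht : 0 ≤ t)
    (h : ℝ → ℝ) (hh : Continuous h) :
    ∫ r in (0:ℝ)..t, phiK b (t - r) * (∫ s in (0:ℝ)..r, phiK a (r - s) * h s)
      = ∫ s in (0:ℝ)..t, phiK (b + a) (t - s) * h s := by
  have hca := phiK_cont a ha.le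
  have hcb := phiK_cont b hb.le
  have h1 : ∫ r in (0:ℝ)..t, phiK b (t - r) * (∫ s in (0:ℝ)..r, phiK a (r - s) * h s)
      = ∫ r in (0:ℝ)..t, ∫ s in (0:ℝ)..t, phiK b (t - r) * (phiK a (r - s) * h s) := by
    apply intervalIntegral.integral_congr
    intro r hr
    rw [Set.uIcc_of_le ht] at hr
    simp only
    rw [intervalIntegral.integral_const_mul]
    congr 1
    have hc : Continuous fun s => phiK a (r - s) * h s :=
      (hca.comp (by fun_prop)).mul hh
    rw [← intervalIntegral.integral_add_adjacent_intervals (b := r) (c := t)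
      (hc.intervalIntegrable _ _) (hc.intervalIntegrable _ _)]
    rw [left_eq_add, intervalIntegral.integral_congr (g := fun _ => 0)]
    · simp
    · intro s hs
      rw [Set.uIcc_of_le hr.2] at hs
      simp only
      rw [phiK_nonpos a _ ha (by linarith [hs.1]), zero_mul]
  rw [h1, intervalIntegral_intervalIntegral_swap]
  · apply intervalIntegral.integral_congr
    intro s hs
    rw [Set.uIcc_of_le ht] at hs
    simp only
    rw [← aux_beta_phi a b s t ha hb hs.1 hs.2, ← intervalIntegral.integral_mul_const]
    congr 1; ext r; ring
  · have hc : Continuous (Function.uncurry fun r s => phiK b (t - r) * (phiK a (r - s) * h s)) := by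
      unfold Function.uncurry
      exact (hcb.comp (by fun_prop)).mul ((hca.comp (by fun_prop)).mul (hh.comp (by fun_prop)))
    exact (hc.continuousOn.integrableOn_compact (isCompact_uIcc.prod isCompact_uIcc)).mono_set
      (Set.prod_mono Set.uIoc_subset_uIcc Set.uIoc_subset_uIcc)

/-- fractional integral of `r ^ (c-1)`. -/
theorem aux_pow (b c t : ℝ) (hb : 1 < b) (hc : 1 ≤ c) (ht : 0 ≤ t) :
    ∫ r in (0:ℝ)..t, phiK b (t - r) * r ^ (c - 1)
      = Real.Gamma c / Real.Gamma (b + c) * t ^ (b + c - 1) := by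
  have h2 : ∫ r in (0:ℝ)..t, phiK b (t - r) * r ^ (c - 1)
     = ∫ r in (0:ℝ)..t, (1 / Real.Gamma b) * ((t - r) ^ (b - 1) * r ^ (c - 1)) := by
    apply intervalIntegral.integral_congr
    intro r hr
    rw [Set.uIcc_of_le (by linarith)] at hr
    simp only
    rw [phiK_nonneg _ _ (by linarith [hr.2])]
    field_simp
  rw [h2, intervalIntegral.integral_const_mul, aux_beta c b t hc hb ht]
  have := (Real.Gamma_pos_of_pos (by linarith : 0 < b)).ne'
  rw [add_comm b c]
  field_simp

theorem ml_bound (α β : ℝ) (hα : 1 < α) (hβ : 1 ≤ β) (k : ℕ) :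
    0 < Real.Gamma (α * k + β) ∧
    1 / Real.Gamma (α * k + β) ≤ (1 + 1 / Real.Gamma β) * (1 / (k.factorial : ℝ)) := by
  have hk : (0:ℝ) ≤ k := Nat.cast_nonneg k
  have hpos : 0 < Real.Gamma (α * k + β) := Real.Gamma_pos_of_pos (by positivity)
  have hβ0 : 0 < Real.Gamma β := Real.Gamma_pos_of_pos (by positivity)
  refine ⟨hpos, ?_⟩
  rcases Nat.eq_zero_or_pos k with rfl | hk1
  · simp
  have hk1' : (1:ℝ) ≤ k := by exact_mod_cast hk1
  have : (k.factorial : ℝ) ≤ Real.Gamma (α * k + β) := by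
    rw [← Real.Gamma_nat_eq_factorial]
    exact Real.Gamma_strictMonoOn_Ici.monotoneOn (by simp; linarith) (by simp; nlinarith)
      (by nlinarith)
  have hf : (0:ℝ) < k.factorial := by positivity
  calc 1 / Real.Gamma (α * k + β) ≤ 1 * (1 / (k.factorial : ℝ)) := by
        rw [one_mul]; exact one_div_le_one_div_of_le hf this
    _ ≤ _ := by gcongr; simp; positivity

theorem ml_term (α β R : ℝ) (hα : 1 < α) (hβ : 1 ≤ β) (k : ℕ) (z : ℝ) (hz : |z| ≤ R) :
    ‖z ^ k / Real.Gamma (α * k + β)‖ ≤ (1 + 1 / Real.Gamma β) * (R ^ k / (k.factorial : ℝ)) := by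
  obtain ⟨hp, hb⟩ := ml_bound α β hα hβ k
  rw [Real.norm_eq_abs, abs_div, abs_pow, abs_of_pos hp]
  have hR : 0 ≤ R := (abs_nonneg z).trans hz
  calc |z| ^ k / Real.Gamma (α * k + β) = |z| ^ k * (1 / Real.Gamma (α * k + β)) := by ring
    _ ≤ R ^ k * ((1 + 1 / Real.Gamma β) * (1 / (k.factorial : ℝ))) := by gcongr
    _ = _ := by ring

theorem ml_maj (β R : ℝ) : Summable fun k : ℕ =>
    (1 + 1 / Real.Gamma β) * (R ^ k / (k.factorial : ℝ)) :=
  (Real.summable_pow_div_factorial R).mul_left _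

theorem ml_hasSum (α β : ℝ) (hα : 1 < α) (hβ : 1 ≤ β) (z : ℝ) :
    HasSum (fun k : ℕ => z ^ k / Real.Gamma (α * k + β)) (mlE α β z) := by
  apply Summable.hasSum
  exact Summable.of_norm_bounded (ml_maj β |z|) (fun k => ml_term α β _ hα hβ k z le_rfl)

theorem ml_cont (α β : ℝ) (hα : 1 < α) (hβ : 1 ≤ β) : Continuous (mlE α β) := by
  rw [continuous_iff_continuousAt]
  intro z
  have : ContinuousOn (mlE α β) (Set.Icc (-(|z| + 1)) (|z| + 1)) := by
    unfold mlE
    apply continuousOn_tsum (u := fun k : ℕ =>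
      (1 + 1 / Real.Gamma β) * ((|z| + 1) ^ k / (k.factorial : ℝ)))
    · intro i; fun_prop
    · exact ml_maj _ _
    · intro n x hx
      exact ml_term α β _ hα hβ n x (abs_le.mpr hx)
  refine this.continuousAt (Icc_mem_nhds ?_ ?_)
  · linarith [neg_abs_le z]
  · linarith [le_abs_self z]

theorem aux_gronwall (T C : ℝ) (v : ℝ → ℝ) (hv : Continuous v) (hv0 : ∀ t, 0 ≤ v t)
    (h : ∀ t ∈ Set.Icc (0:ℝ) T, v t ≤ C * ∫ s in (0:ℝ)..t, v s) :
    ∀ t ∈ Set.Icc (0:ℝ) T, v t = 0 := by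
  have key := eq_zero_of_abs_deriv_le_mul_abs_self_of_eq_zero_right
    (f := fun t => ∫ s in (0:ℝ)..t, v s) (f' := v) (K := C) (a := 0) (b := T)
    (intervalIntegral.continuous_primitive (fun a b => hv.intervalIntegrable a b) 0).continuousOn
    (fun x _ => (hv.integral_hasStrictDerivAt 0 x).hasDerivAt.hasDerivWithinAt)
    (by simp)
    (by
      intro x hx
      have : 0 ≤ ∫ s in (0:ℝ)..x, v s :=
        intervalIntegral.integral_nonneg hx.1 (fun s _ => hv0 s)
      rw [Real.norm_of_nonneg (hv0 x), Real.norm_of_nonneg this]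
      exact h x ⟨hx.1, hx.2.le⟩)
  intro t ht
  have h1 := h t ht
  have h2 : (∫ s in (0:ℝ)..t, v s) = 0 := key t ht
  rw [h2, mul_zero] at h1
  exact le_antisymm h1 (hv0 t)

theorem aux_step (α β b u0 u1 t : ℝ) (hα : 1 < α) (hβ : 1 < β) (ht : 0 ≤ t)
    (U H : ℝ → ℝ) (hU : Continuous U) (hH : Continuous H)
    (heq : ∀ τ ∈ Set.Icc (0:ℝ) t, U τ = u0 + u1 * τ
      + ∫ s in (0:ℝ)..τ, phiK α (τ - s) * (b * U s + H s)) :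
    ∫ s in (0:ℝ)..t, phiK β (t - s) * U s
      = u0 * (t ^ β / Real.Gamma (β + 1)) + u1 * (t ^ (β + 1) / Real.Gamma (β + 2))
        + ∫ s in (0:ℝ)..t, phiK (β + α) (t - s) * (b * U s + H s) := by
  have hcb := phiK_cont β hβ.le
  have hca := phiK_cont α hα.le
  have hG : Continuous fun s => b * U s + H s := by fun_prop
  have hI : Continuous fun r => ∫ s in (0:ℝ)..r, phiK α (r - s) * (b * U s + H s) := by
    apply intervalIntegral.continuous_parametric_intervalIntegral_of_continuous
      (f := fun r s => phiK α (r - s) * (b * U s + H s)) _ continuous_id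
    unfold Function.uncurry
    exact (hca.comp (by fun_prop)).mul (hG.comp continuous_snd)
  have hb' : Continuous fun r => phiK β (t - r) := hcb.comp (by fun_prop)
  have h1 : ∫ s in (0:ℝ)..t, phiK β (t - s) * U s
      = ∫ r in (0:ℝ)..t, ((u0 * (phiK β (t - r) * r ^ ((1:ℝ) - 1))
        + u1 * (phiK β (t - r) * r ^ ((2:ℝ) - 1)))
        + phiK β (t - r) * ∫ s in (0:ℝ)..r, phiK α (r - s) * (b * U s + H s)) := by
    apply intervalIntegral.integral_congr
    intro r hr
    rw [Set.uIcc_of_le ht] at hr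
    simp only
    rw [heq r hr]
    have : (2:ℝ) - 1 = 1 := by norm_num
    rw [this, sub_self, Real.rpow_zero, Real.rpow_one]
    ring
  have c1 : Continuous fun r : ℝ => u0 * (phiK β (t - r) * r ^ ((1:ℝ) - 1)) := by
    simp only [sub_self, Real.rpow_zero]; fun_prop
  have c2 : Continuous fun r : ℝ => u1 * (phiK β (t - r) * r ^ ((2:ℝ) - 1)) := by
    have : (2:ℝ) - 1 = 1 := by norm_num
    simp only [this, Real.rpow_one]; fun_prop
  have c12 : Continuous fun r : ℝ => u0 * (phiK β (t - r) * r ^ ((1:ℝ) - 1))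
      + u1 * (phiK β (t - r) * r ^ ((2:ℝ) - 1)) := c1.add c2
  have c3 : Continuous fun r : ℝ => phiK β (t - r) *
      ∫ s in (0:ℝ)..r, phiK α (r - s) * (b * U s + H s) := hb'.mul hI
  rw [h1, intervalIntegral.integral_add (c12.intervalIntegrable _ _) (c3.intervalIntegrable _ _),
    intervalIntegral.integral_add (c1.intervalIntegrable _ _) (c2.intervalIntegrable _ _),
    intervalIntegral.integral_const_mul, intervalIntegral.integral_const_mul,
    aux_pow β 1 t hβ le_rfl ht, aux_pow β 2 t hβ (by norm_num) ht,
    aux_semigroup α β t hα hβ ht _ hG, Real.Gamma_one, Real.Gamma_two]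
  have e1 : β + 1 - 1 = β := by ring
  have e2 : β + 2 - 1 = β + 1 := by ring
  rw [e1, e2]
  ring

theorem aux_split (α b t : ℝ) (hα : 1 ≤ α) (U H : ℝ → ℝ) (hU : Continuous U) (hH : Continuous H) :
    ∫ s in (0:ℝ)..t, phiK α (t - s) * (b * U s + H s)
      = b * (∫ s in (0:ℝ)..t, phiK α (t - s) * U s) + ∫ s in (0:ℝ)..t, phiK α (t - s) * H s := by
  have hb' : Continuous fun r => phiK α (t - r) := (phiK_cont α hα).comp (by fun_prop)
  rw [← intervalIntegral.integral_const_mul, ← intervalIntegral.integral_add]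
  · congr 1; ext s; ring
  · exact (continuous_const.mul (hb'.mul hU)).intervalIntegrable _ _
  · exact (hb'.mul hH).intervalIntegrable _ _

theorem aux_iter (α b u0 u1 t : ℝ) (hα : 1 < α) (ht : 0 ≤ t)
    (U H : ℝ → ℝ) (hU : Continuous U) (hH : Continuous H)
    (heq : ∀ τ ∈ Set.Icc (0:ℝ) t, U τ = u0 + u1 * τ
      + ∫ s in (0:ℝ)..τ, phiK α (τ - s) * (b * U s + H s)) (n : ℕ) :
    U t = u0 * ∑ k ∈ Finset.range (n + 1), (b * t ^ α) ^ k / Real.Gamma (α * k + 1)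
      + u1 * (t * ∑ k ∈ Finset.range (n + 1), (b * t ^ α) ^ k / Real.Gamma (α * k + 2))
      + (∑ k ∈ Finset.range (n + 1), b ^ k * ∫ s in (0:ℝ)..t, phiK (α * k + α) (t - s) * H s)
      + b * (b ^ n * ∫ s in (0:ℝ)..t, phiK (α * n + α) (t - s) * U s) := by
  induction n with
  | zero =>
    rw [heq t ⟨ht, le_rfl⟩, aux_split α b t hα.le U H hU hH]
    simp
    ring
  | succ n ih =>
    have hn : (0:ℝ) ≤ n := Nat.cast_nonneg n
    have hβ : 1 < α * n + α := by nlinarith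
    have e1 : α * ((n + 1 : ℕ) : ℝ) = α * n + α := by push_cast; ring
    have hpow : (b * t ^ α) ^ (n + 1) = b ^ (n + 1) * t ^ (α * n + α) := by
      rw [mul_pow, ← Real.rpow_natCast (t ^ α), ← Real.rpow_mul ht, e1]
    have hpow2 : t ^ (α * n + α + 1) = t ^ (α * n + α) * t :=
      Real.rpow_add_one' ht (by linarith)
    rw [Finset.sum_range_succ _ (n + 1), Finset.sum_range_succ _ (n + 1),
      Finset.sum_range_succ _ (n + 1), e1, hpow]
    rw [aux_step α (α * n + α) b u0 u1 t hα hβ ht U H hU hH heq,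
      aux_split (α * n + α + α) b t (by linarith) U H hU hH, hpow2] at ih
    rw [ih]
    ring

theorem aux_hasSum (α b t : ℝ) (hα : 1 < α) (ht : 0 ≤ t) (H : ℝ → ℝ) (hH : Continuous H) :
    HasSum (fun k : ℕ => b ^ k * ∫ s in (0:ℝ)..t, phiK (α * k + α) (t - s) * H s)
      (∫ s in (0:ℝ)..t, (t - s) ^ (α - 1) * mlE α α (b * (t - s) ^ α) * H s) := by
  obtain ⟨M, hM⟩ := (isCompact_Icc (a := (0:ℝ)) (b := t)).exists_bound_of_continuousOn
    hH.continuousOn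
  simp_rw [← intervalIntegral.integral_const_mul]
  have ha : (0:ℝ) ≤ α - 1 := by linarith
  have hterm : ∀ (k : ℕ) (s : ℝ), s ∈ Set.Icc (0:ℝ) t →
      b ^ k * (phiK (α * k + α) (t - s) * H s)
      = (t - s) ^ (α - 1) * ((b * (t - s) ^ α) ^ k / Real.Gamma (α * k + α)) * H s := by
    intro k s hs
    have h0 : 0 ≤ t - s := by linarith [hs.2]
    have hk : (0:ℝ) ≤ k := Nat.cast_nonneg k
    rw [phiK_nonneg _ _ h0, mul_pow, ← Real.rpow_natCast ((t - s) ^ α), ← Real.rpow_mul h0]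
    have : (t - s) ^ (α * k + α - 1) = (t - s) ^ (α * k) * (t - s) ^ (α - 1) := by
      rw [← Real.rpow_add_of_nonneg h0 (by positivity) ha]; congr 1; ring
    rw [this]; ring
  apply intervalIntegral.hasSum_integral_of_dominated_convergence
    (fun (k : ℕ) _ => t ^ (α - 1) * ((1 + 1 / Real.Gamma α) *
      ((|b| * t ^ α) ^ k / (k.factorial : ℝ))) * M)
  · intro k
    have hk : (0:ℝ) ≤ k := Nat.cast_nonneg k
    have : Continuous fun s => phiK (α * k + α) (t - s) :=
      (phiK_cont _ (by nlinarith)).comp (by fun_prop)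
    exact (continuous_const.mul (this.mul hH)).aestronglyMeasurable
  · intro k
    refine Filter.Eventually.of_forall fun s hs => ?_
    rw [Set.uIoc_of_le ht] at hs
    have hs' : s ∈ Set.Icc (0:ℝ) t := ⟨hs.1.le, hs.2⟩
    have h0 : 0 ≤ t - s := by linarith [hs.2]
    rw [hterm k s hs', norm_mul, norm_mul]
    have hz : |b * (t - s) ^ α| ≤ |b| * t ^ α := by
      rw [abs_mul, abs_of_nonneg (Real.rpow_nonneg h0 α)]
      gcongr
      linarith [hs.1]
    have h3 := ml_term α α _ hα hα.le k _ hz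
    have h2 : ‖(t - s) ^ (α - 1)‖ ≤ t ^ (α - 1) := by
      rw [Real.norm_of_nonneg (Real.rpow_nonneg h0 _)]
      gcongr
      linarith [hs.1]
    have hp := Real.rpow_nonneg ht (α - 1)
    have hM' := hM s hs'
    exact mul_le_mul (mul_le_mul h2 h3 (norm_nonneg _) hp) hM' (norm_nonneg _)
      (mul_nonneg hp ((norm_nonneg _).trans h3))
  · refine Filter.Eventually.of_forall fun s hs => ?_
    exact ((ml_maj α _).mul_left _).mul_right _
  · exact _root_.intervalIntegrable_const
  · refine Filter.Eventually.of_forall fun s hs => ?_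
    rw [Set.uIoc_of_le ht] at hs
    have hs' : s ∈ Set.Icc (0:ℝ) t := ⟨hs.1.le, hs.2⟩
    simp_rw [hterm _ s hs']
    exact ((ml_hasSum α α hα hα.le _).mul_left _).mul_right _

theorem aux_voc (α b u0 u1 t : ℝ) (hα : 1 < α) (ht : 0 ≤ t)
    (U H : ℝ → ℝ) (hU : Continuous U) (hH : Continuous H)
    (heq : ∀ τ ∈ Set.Icc (0:ℝ) t, U τ = u0 + u1 * τ
      + ∫ s in (0:ℝ)..τ, phiK α (τ - s) * (b * U s + H s)) :
    U t = u0 * mlE α 1 (b * t ^ α) + u1 * (t * mlE α 2 (b * t ^ α))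
      + ∫ s in (0:ℝ)..t, (t - s) ^ (α - 1) * mlE α α (b * (t - s) ^ α) * H s := by
  have l1 := (ml_hasSum α 1 hα le_rfl (b * t ^ α)).tendsto_sum_nat.comp
    (Filter.tendsto_add_atTop_nat 1)
  have l2 := (ml_hasSum α 2 hα (by norm_num) (b * t ^ α)).tendsto_sum_nat.comp
    (Filter.tendsto_add_atTop_nat 1)
  have l3 := (aux_hasSum α b t hα ht H hH).tendsto_sum_nat.comp
    (Filter.tendsto_add_atTop_nat 1)
  have l4 := (aux_hasSum α b t hα ht U hU).summable.tendsto_atTop_zero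
  have l := (((l1.const_mul u0).add ((l2.const_mul t).const_mul u1)).add l3).add (l4.const_mul b)
  rw [mul_zero, add_zero] at l
  refine tendsto_nhds_unique (tendsto_const_nhds.congr fun n => ?_) l
  exact aux_iter α b u0 u1 t hα ht U H hU hH heq n

theorem ker_nonneg (α L S b : ℝ) (hα : 1 < α) (hL : 0 < L)
    (hpos : ∀ t ∈ Set.Icc (0 : ℝ) S, mlE α α (-(L * t ^ α)) > 0) (hb : -L ≤ b)
    (r : ℝ) (hr : r ∈ Set.Icc (0:ℝ) S) : 0 ≤ mlE α α (b * r ^ α) := by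
  rcases le_total 0 b with h | h
  · unfold mlE
    apply tsum_nonneg
    intro k
    have := (ml_bound α α hα hα.le k).1
    have := Real.rpow_nonneg hr.1 α
    positivity
  · have hq0 : 0 ≤ -b / L := div_nonneg (by linarith) hL.le
    have hq1 : -b / L ≤ 1 := by rw [div_le_one hL]; linarith
    have hc0 : 0 ≤ (-b / L) ^ (1 / α) := Real.rpow_nonneg hq0 _
    have hc1 : (-b / L) ^ (1 / α) ≤ 1 := Real.rpow_le_one hq0 hq1 (by positivity)
    have := hpos ((-b / L) ^ (1 / α) * r) ⟨mul_nonneg hc0 hr.1, by nlinarith [hr.1, hr.2]⟩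
    rw [Real.mul_rpow hc0 hr.1, ← Real.rpow_mul hq0, one_div_mul_cancel (by linarith),
      Real.rpow_one] at this
    have e : -(L * (-b / L * r ^ α)) = b * r ^ α := by field_simp; try ring
    rw [e] at this
    exact this.le

theorem aux_quot (f : ℝ → ℝ → ℝ) (y₁ : ℝ → ℝ) (T L t : ℝ)
    (hf_lip : ∀ t ∈ Set.Icc (0 : ℝ) T, ∀ x z : ℝ, |f t x - f t z| ≤ L * |x - z|)
    (htT : t ≤ T) (r : ℝ) (hr : r ∈ {r : ℝ | ∃ τ ∈ Set.Icc (0 : ℝ) t, ∃ x : ℝ, x ≠ 0 ∧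
        r = (f τ (x + y₁ τ) - f τ (y₁ τ)) / x}) : -L ≤ r ∧ r ≤ L := by
  obtain ⟨τ, hτ, x, hx, rfl⟩ := hr
  rw [← abs_le, abs_div, div_le_iff₀ (abs_pos.mpr hx)]
  have := hf_lip τ ⟨hτ.1, hτ.2.trans htT⟩ (x + y₁ τ) (y₁ τ)
  rwa [add_sub_cancel_right] at this

/-- Separation bounds in the general nonlinear case (Theorem 2.12 of the paper). -/
theorem nonlinear_separation_bounds
    (α T Tstar L y₁₀ y₁₁ y₂₀ y₂₁ : ℝ) (hα₁ : 1 < α) (hα₂ : α < 2)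
    (hT : 0 < T) (hL : 0 < L)
    (f : ℝ → ℝ → ℝ)
    (hf_cont : ContinuousOn (fun p : ℝ × ℝ => f p.1 p.2) (Set.Icc 0 T ×ˢ Set.univ))
    (hf_lip : ∀ t ∈ Set.Icc (0 : ℝ) T, ∀ x z : ℝ, |f t x - f t z| ≤ L * |x - z|)
    (y₁ y₂ : ℝ → ℝ)
    (hy₁cont : ContinuousOn y₁ (Set.Icc 0 T)) (hy₂cont : ContinuousOn y₂ (Set.Icc 0 T))
    (hy₁ : ∀ t ∈ Set.Icc (0 : ℝ) T,
      y₁ t = y₁₀ + y₁₁ * t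
        + (1 / Real.Gamma α) * ∫ s in (0 : ℝ)..t, (t - s) ^ (α - 1) * f s (y₁ s))
    (hy₂ : ∀ t ∈ Set.Icc (0 : ℝ) T,
      y₂ t = y₂₀ + y₂₁ * t
        + (1 / Real.Gamma α) * ∫ s in (0 : ℝ)..t, (t - s) ^ (α - 1) * f s (y₂ s))
    (h0 : y₁₀ ≤ y₂₀) (h1 : y₁₁ ≤ y₂₁)
    (hTstar : 0 < Tstar) (hTstarT : Tstar ≤ T)
    (hposαα : ∀ t ∈ Set.Icc (0 : ℝ) Tstar, mlE α α (-(L * t ^ α)) > 0)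
    (hposα1 : ∀ t ∈ Set.Icc (0 : ℝ) Tstar, mlE α 1 (-(L * t ^ α)) > 0)
    (hposα2 : ∀ t ∈ Set.Icc (0 : ℝ) Tstar, mlE α 2 (-(L * t ^ α)) > 0)
    (alow astar : ℝ → ℝ)
    (halow : ∀ t ∈ Set.Icc (0 : ℝ) T,
      alow t = sInf {r : ℝ | ∃ τ ∈ Set.Icc (0 : ℝ) t, ∃ x : ℝ, x ≠ 0 ∧
        r = (f τ (x + y₁ τ) - f τ (y₁ τ)) / x})
    (hastar : ∀ t ∈ Set.Icc (0 : ℝ) T,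
      astar t = sSup {r : ℝ | ∃ τ ∈ Set.Icc (0 : ℝ) t, ∃ x : ℝ, x ≠ 0 ∧
        r = (f τ (x + y₁ τ) - f τ (y₁ τ)) / x}) :
    ∀ t ∈ Set.Icc (0 : ℝ) Tstar,
      (y₂₀ - y₁₀) * mlE α 1 (alow t * t ^ α)
          + (y₂₁ - y₁₁) * (t * mlE α 2 (alow t * t ^ α)) ≤ y₂ t - y₁ t ∧
        y₂ t - y₁ t ≤ (y₂₀ - y₁₀) * mlE α 1 (astar t * t ^ α)
          + (y₂₁ - y₁₁) * (t * mlE α 2 (astar t * t ^ α)) := by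
  have hLip := hf_lip
  set u0 := y₂₀ - y₁₀ with hu0
  set u1 := y₂₁ - y₁₁ with hu1
  have hu0' : 0 ≤ u0 := by rw [hu0]; linarith
  have hu1' : 0 ≤ u1 := by rw [hu1]; linarith
  obtain ⟨P, hPc, hPm, hPi⟩ : ∃ P : ℝ → ℝ, Continuous P ∧ (∀ s, P s ∈ Set.Icc (0:ℝ) T) ∧
      ∀ s ∈ Set.Icc (0:ℝ) T, P s = s := by
    refine ⟨fun s => max 0 (min s T), by fun_prop, fun s => ⟨le_max_left _ _, ?_⟩, fun s hs => ?_⟩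
    · exact max_le hT.le (min_le_right _ _)
    · simp only
      rw [min_eq_left hs.2, max_eq_right hs.1]
  have hyc : ∀ y : ℝ → ℝ, ContinuousOn y (Set.Icc 0 T) → Continuous fun s => y (P s) :=
    fun y hy => hy.comp_continuous hPc hPm
  have hFc : ∀ y : ℝ → ℝ, ContinuousOn y (Set.Icc 0 T) → Continuous fun s => f (P s) (y (P s)) := by
    intro y hy
    exact hf_cont.comp_continuous (f := fun s => (P s, y (P s))) (hPc.prodMk (hyc y hy))
      (fun s => ⟨hPm s, Set.mem_univ _⟩)
  obtain ⟨U, hUdef⟩ : ∃ U : ℝ → ℝ, U = fun s => y₂ (P s) - y₁ (P s) := ⟨_, rfl⟩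
  obtain ⟨G, hGdef⟩ : ∃ G : ℝ → ℝ, G = fun s => f (P s) (y₂ (P s)) - f (P s) (y₁ (P s)) := ⟨_, rfl⟩
  have hU : Continuous U := by rw [hUdef]; exact (hyc y₂ hy₂cont).sub (hyc y₁ hy₁cont)
  have hG : Continuous G := by rw [hGdef]; exact (hFc y₂ hy₂cont).sub (hFc y₁ hy₁cont)
  have hGU : ∀ s, |G s| ≤ L * |U s| := by
    intro s; rw [hGdef, hUdef]; exact hf_lip (P s) (hPm s) _ _
  have hintg : ∀ y : ℝ → ℝ, ∀ τ ∈ Set.Icc (0:ℝ) T,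
      (1 / Real.Gamma α) * (∫ s in (0 : ℝ)..τ, (τ - s) ^ (α - 1) * f s (y s))
      = ∫ s in (0:ℝ)..τ, phiK α (τ - s) * f (P s) (y (P s)) := by
    intro y τ hτ
    rw [← intervalIntegral.integral_const_mul]
    apply intervalIntegral.integral_congr
    intro s hs
    rw [Set.uIcc_of_le hτ.1] at hs
    simp only
    rw [phiK_nonneg _ _ (by linarith [hs.2]), hPi s ⟨hs.1, hs.2.trans hτ.2⟩]
    ring
  have hUeq : ∀ τ ∈ Set.Icc (0:ℝ) T, U τ = u0 + u1 * τ + ∫ s in (0:ℝ)..τ, phiK α (τ - s) * G s := by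
    intro τ hτ
    have hk : Continuous fun s => phiK α (τ - s) := (phiK_cont α hα₁.le).comp (by fun_prop)
    have : ∫ s in (0:ℝ)..τ, phiK α (τ - s) * G s
        = (∫ s in (0:ℝ)..τ, phiK α (τ - s) * f (P s) (y₂ (P s)))
          - ∫ s in (0:ℝ)..τ, phiK α (τ - s) * f (P s) (y₁ (P s)) := by
      rw [← intervalIntegral.integral_sub]
      · rw [hGdef]; congr 1; ext s; ring
      · exact (hk.mul (hFc y₂ hy₂cont)).intervalIntegrable _ _
      · exact (hk.mul (hFc y₁ hy₁cont)).intervalIntegrable _ _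
    rw [this, ← hintg y₁ τ hτ, ← hintg y₂ τ hτ, hUdef]
    simp only
    rw [hPi τ hτ, hy₁ τ hτ, hy₂ τ hτ, hu0, hu1]
    ring
  have hvoc : ∀ b : ℝ, ∀ t ∈ Set.Icc (0:ℝ) Tstar,
      U t = u0 * mlE α 1 (b * t ^ α) + u1 * (t * mlE α 2 (b * t ^ α))
      + ∫ s in (0:ℝ)..t, (t - s) ^ (α - 1) * mlE α α (b * (t - s) ^ α) * (G s - b * U s) := by
    intro b t ht
    apply aux_voc α b u0 u1 t hα₁ ht.1 U (fun s => G s - b * U s) hU (by fun_prop)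
    intro τ hτ
    rw [hUeq τ ⟨hτ.1, by linarith [hτ.2, ht.2]⟩]
    congr 2
    ext s; ring
  have hkc : ∀ b : ℝ, Continuous fun r : ℝ => r ^ (α - 1) * mlE α α (b * r ^ α) := by
    intro b
    have c1 : Continuous fun r : ℝ => r ^ (α - 1) :=
      continuous_id.rpow_const (fun _ => Or.inr (by linarith))
    have c2 : Continuous fun r : ℝ => r ^ α :=
      continuous_id.rpow_const (fun _ => Or.inr (by linarith))
    exact c1.mul ((ml_cont α α hα₁ hα₁.le).comp (continuous_const.mul c2))
  have hkn : ∀ b : ℝ, -L ≤ b → ∀ r ∈ Set.Icc (0:ℝ) Tstar, 0 ≤ r ^ (α - 1) * mlE α α (b * r ^ α) :=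
    fun b hb r hr => mul_nonneg (Real.rpow_nonneg hr.1 _)
      (ker_nonneg α L Tstar b hα₁ hL hposαα hb r hr)
  -- Step 1: the difference is nonnegative
  have hUnn : ∀ t ∈ Set.Icc (0:ℝ) Tstar, 0 ≤ U t := by
    obtain ⟨M, hM⟩ := (isCompact_Icc (a := (0:ℝ)) (b := Tstar)).exists_bound_of_continuousOn
      (hkc (-L)).continuousOn
    have hv : Continuous fun s => max (-U s) 0 := by fun_prop
    have hg := aux_gronwall Tstar (2 * L * M) (fun s => max (-U s) 0) hv
      (fun t => le_max_right _ _) (by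
        intro t ht
        have hMn : 0 ≤ M := (norm_nonneg _).trans (hM t ht)
        have hvn : 0 ≤ ∫ s in (0:ℝ)..t, max (-U s) 0 :=
          intervalIntegral.integral_nonneg ht.1 (fun s _ => le_max_right _ _)
        refine max_le ?_ (by positivity)
        have hkt : Continuous fun s : ℝ => (t - s) ^ (α - 1) * mlE α α (-L * (t - s) ^ α) :=
          (hkc (-L)).comp (continuous_const.sub continuous_id)
        have hmono : ∫ s in (0:ℝ)..t, (-(2 * L * M)) * max (-U s) 0
            ≤ ∫ s in (0:ℝ)..t, (t - s) ^ (α - 1) * mlE α α (-L * (t - s) ^ α)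
              * (G s - -L * U s) := by
          apply intervalIntegral.integral_mono_on ht.1
            ((continuous_const.mul hv).intervalIntegrable _ _)
            ((hkt.mul (hG.sub (continuous_const.mul hU))).intervalIntegrable _ _)
          intro s hs
          have hts : t - s ∈ Set.Icc (0:ℝ) Tstar := ⟨by linarith [hs.2], by linarith [hs.1, ht.2]⟩
          have k0 := hkn (-L) le_rfl (t - s) hts
          have k1 := (Real.le_norm_self _).trans (hM (t - s) hts)
          have hv0 : 0 ≤ max (-U s) 0 := le_max_right _ _
          have hH : -(2 * L * max (-U s) 0) ≤ G s - -L * U s := by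
            have hgu := (abs_le.mp (hGU s)).1
            rcases le_total 0 (U s) with h | h
            · rw [abs_of_nonneg h] at hgu
              rw [max_eq_right (by linarith)]
              linarith
            · rw [abs_of_nonpos h] at hgu
              rw [max_eq_left (by linarith)]
              linarith
          calc -(2 * L * M) * max (-U s) 0 = M * -(2 * L * max (-U s) 0) := by ring
            _ ≤ (t - s) ^ (α - 1) * mlE α α (-L * (t - s) ^ α) * -(2 * L * max (-U s) 0) :=
                mul_le_mul_of_nonpos_right k1 (by
                  have : 0 ≤ 2 * L * max (-U s) 0 := by positivity
                  linarith)
            _ ≤ _ := mul_le_mul_of_nonneg_left hH k0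
        rw [intervalIntegral.integral_const_mul] at hmono
        have e := hvoc (-L) t ht
        have p1 := hposα1 t ht
        have p2 := hposα2 t ht
        rw [← neg_mul] at p1 p2
        have q1 : 0 ≤ u0 * mlE α 1 (-L * t ^ α) := mul_nonneg hu0' p1.le
        have q2 : 0 ≤ u1 * (t * mlE α 2 (-L * t ^ α)) :=
          mul_nonneg hu1' (mul_nonneg ht.1 p2.le)
        linarith)
    intro t ht
    have h2 : max (-U t) 0 = 0 := hg t ht
    have h3 := le_max_left (-U t) 0
    linarith
  -- Step 2: comparison
  intro t ht
  have htT : t ∈ Set.Icc (0:ℝ) T := ⟨ht.1, ht.2.trans hTstarT⟩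
  have hbd := aux_quot f y₁ T L t hf_lip htT.2
  set S : Set ℝ := {r : ℝ | ∃ τ ∈ Set.Icc (0 : ℝ) t, ∃ x : ℝ, x ≠ 0 ∧
        r = (f τ (x + y₁ τ) - f τ (y₁ τ)) / x} with hS
  have hne : S.Nonempty := ⟨_, t, ⟨ht.1, le_rfl⟩, 1, one_ne_zero, rfl⟩
  have hbb : BddBelow S := ⟨-L, fun r hr => (hbd r hr).1⟩
  have hba : BddAbove S := ⟨L, fun r hr => (hbd r hr).2⟩
  have hlow : -L ≤ alow t := by
    rw [halow t htT]; exact le_csInf hne fun r hr => (hbd r hr).1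
  have hup : -L ≤ astar t := by
    obtain ⟨r, hr⟩ := hne
    rw [hastar t htT]; exact (hbd r hr).1.trans (le_csSup hba hr)
  have hcmp : ∀ s ∈ Set.Icc (0:ℝ) t, alow t * U s ≤ G s ∧ G s ≤ astar t * U s := by
    intro s hs
    have hU0 := hUnn s ⟨hs.1, hs.2.trans ht.2⟩
    rcases hU0.eq_or_lt with h | h
    · have hg0 := hGU s
      rw [← h, abs_zero, mul_zero] at hg0
      have : G s = 0 := abs_nonpos_iff.mp hg0
      rw [this, ← h]; simp
    · have hm : G s / U s ∈ S := by
        refine ⟨s, hs, U s, h.ne', ?_⟩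
        rw [hGdef, hUdef]
        simp only
        rw [hPi s ⟨hs.1, hs.2.trans htT.2⟩, sub_add_cancel]
      rw [← le_div_iff₀ h, ← div_le_iff₀ h, halow t htT, hastar t htT]
      exact ⟨csInf_le hbb hm, le_csSup hba hm⟩
  have hUt : y₂ t - y₁ t = U t := by rw [hUdef]; simp only; rw [hPi t htT]
  rw [hUt]
  have hts : ∀ s ∈ Set.Icc (0:ℝ) t, t - s ∈ Set.Icc (0:ℝ) Tstar := fun s hs =>
    ⟨by linarith [hs.2], by linarith [hs.1, ht.2]⟩
  constructor
  · have e := hvoc (alow t) t ht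
    have : 0 ≤ ∫ s in (0:ℝ)..t, (t - s) ^ (α - 1) * mlE α α (alow t * (t - s) ^ α)
        * (G s - alow t * U s) :=
      intervalIntegral.integral_nonneg ht.1 fun s hs =>
        mul_nonneg (hkn _ hlow _ (hts s hs)) (by linarith [(hcmp s hs).1])
    linarith
  · have e := hvoc (astar t) t ht
    have : 0 ≤ ∫ s in (0:ℝ)..t, -((t - s) ^ (α - 1) * mlE α α (astar t * (t - s) ^ α)
        * (G s - astar t * U s)) :=
      intervalIntegral.integral_nonneg ht.1 fun s hs => by
        rw [← mul_neg]
        exact mul_nonneg (hkn _ hup _ (hts s hs)) (by linarith [(hcmp s hs).2])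
    rw [intervalIntegral.integral_neg] at this
    linarith
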